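/- arXiv:1707.05396 — 6 statements merged into one kernel-verified Lean document; each statement's English description precedes it below -/
import Mathlib

section
/- For every graph H there exists a constant C > 0 depending only on H (one may take C = 2·6^{v(H)(v(H)−1)/2}) such that for every p ∈ [0,1], every δ > 0, and every graph G satisfying R_{H,p}(δ), the following holds: for every sequence of (not necessarily disjoint) subsets U₁,…,U_{v(H)} ⊆ V(G), |c(H,G;U₁,…,U_{v(H)}) − p^{e(H)}·∏_i|U_i|| ≤ C·δ·v(G)^{v(H)} + C·v(G)^{v(H)−1}. -/
/-!
Colour the vertices of `G` by the vertices of `H`, averaging over all colourings `f : β → α`.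
For a fixed `f` the sets `Uᵢ ∩ f⁻¹(i)` are pairwise disjoint, so `PropR` controls the signed sum of
the weights `w φ = 1[φ is a homomorphism] - p ^ e(H)` over the maps `φ ∈ ∏ Uᵢ` with `f (φ i) = i`
for all `i`. A non-injective `φ` is compatible with no colouring, and an injective one with exactly
`r ^ (n - r)` of the `r ^ n` colourings, where `r = v(H)` and `n = v(G)`. Summing over `f`, the
total weight of the injective maps in `∏ Uᵢ` is at most `r ^ r * δ * n ^ r` in absolute value. As
`|w φ| ≤ 1`, the non-injective maps, of which there are at most `r ^ 2 * n ^ (r - 1)`, account for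
the lower-order term.
-/

open Finset

/-- Number of homomorphisms `φ : H → G` with `φ i ∈ U i` for each vertex `i` of `H`. -/
noncomputable def homCount {α β : Type} [Fintype α] [Fintype β]
    (H : SimpleGraph α) (G : SimpleGraph β) (U : α → Finset β) : ℕ :=
  Nat.card {φ : α → β // (∀ i, φ i ∈ U i) ∧ ∀ i j, H.Adj i j → G.Adj (φ i) (φ j)}

/-- Number of edges of a graph. -/
noncomputable def edgeCount {α : Type} [Fintype α] (H : SimpleGraph α) : ℕ :=
  Nat.card H.edgeSet

/-- Number of edges of the induced subgraph `G[U]`. -/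
noncomputable def inducedEdgeCount {β : Type} [Fintype β] (G : SimpleGraph β)
    (U : Finset β) : ℕ :=
  Nat.card (G.induce (U : Set β)).edgeSet

/-- The quasirandomness property `R_{H,p}(δ)`. -/
def PropR {α β : Type} [Fintype α] [Fintype β]
    (H : SimpleGraph α) (G : SimpleGraph β) (p δ : ℝ) : Prop :=
  ∀ U : α → Finset β, (∀ i j, i ≠ j → Disjoint (U i) (U j)) →
    |(homCount H G U : ℝ) - p ^ edgeCount H * ∏ i, ((U i).card : ℝ)| ≤
      δ * (Fintype.card β : ℝ) ^ (Fintype.card α)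

/-- The quasirandomness property `R'_{H,p}(δ)`. -/
def PropR' {α β : Type} [Fintype α] [Fintype β]
    (H : SimpleGraph α) (G : SimpleGraph β) (p δ : ℝ) : Prop :=
  ∀ U : α → Finset β,
    |(homCount H G U : ℝ) - p ^ edgeCount H * ∏ i, ((U i).card : ℝ)| ≤
      δ * (Fintype.card β : ℝ) ^ (Fintype.card α)

/-- The hereditary quasirandomness property `P*_{K₂,p}(ε)`. -/
def PropStar {β : Type} [Fintype β] (G : SimpleGraph β) (p ε : ℝ) : Prop :=
  ∀ U : Finset β,
    |2 * (inducedEdgeCount G U : ℝ) - p * (U.card : ℝ) ^ 2| ≤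
      ε * (Fintype.card β : ℝ) ^ 2

open Classical in
/-- The weight `1[φ is a homomorphism H → G] - q` of a map `φ`; it is used with
`q = p ^ edgeCount H`, so that summing it over `∏ Uᵢ` gives the discrepancy of `U`. -/
noncomputable def homWeight {α β : Type} (H : SimpleGraph α) (G : SimpleGraph β) (q : ℝ)
    (φ : α → β) : ℝ :=
  (if ∀ i j, H.Adj i j → G.Adj (φ i) (φ j) then 1 else 0) - q

lemma abs_homWeight_le {α β : Type} (H : SimpleGraph α) (G : SimpleGraph β) {q : ℝ}
    (h0 : 0 ≤ q) (h1 : q ≤ 1) (φ : α → β) : |homWeight H G q φ| ≤ 1 := by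
  unfold homWeight
  rw [abs_le]
  split_ifs <;> constructor <;> linarith

open Classical in
lemma homCount_sub_eq_sum {α β : Type} [Fintype α] [Fintype β] (H : SimpleGraph α)
    (G : SimpleGraph β) (q : ℝ) (U : α → Finset β) :
    (homCount H G U : ℝ) - q * ∏ i, ((U i).card : ℝ) =
      ∑ φ ∈ Fintype.piFinset U, homWeight H G q φ := by
  unfold homWeight homCount
  rw [Finset.sum_sub_distrib, Finset.sum_const, Fintype.card_piFinset,
    Nat.card_eq_fintype_card, Fintype.card_subtype]
  have : (univ.filter fun φ : α → β =>
      (∀ i, φ i ∈ U i) ∧ ∀ i j, H.Adj i j → G.Adj (φ i) (φ j)) =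
      (Fintype.piFinset U).filter fun φ => ∀ i j, H.Adj i j → G.Adj (φ i) (φ j) := by
    ext φ; simp
  rw [this, Finset.natCast_card_filter, nsmul_eq_mul, Nat.cast_prod, mul_comm q]
  congr!

open Classical in
/-- An injective map is compatible with a proportion `r ^ (-r)` of all colourings. -/
lemma card_colorings_mul {α β : Type} [Fintype α] [Fintype β] (φ : α → β)
    (hφ : Function.Injective φ) :
    (univ.filter fun f : β → α => ∀ i, f (φ i) = i).card * Fintype.card α ^ Fintype.card α =
      Fintype.card α ^ Fintype.card β := by
  have hset : (univ.filter fun f : β → α => ∀ i, f (φ i) = i) =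
      Fintype.piFinset fun b => univ.filter fun a => ∀ i, φ i = b → a = i := by
    ext f
    simp only [mem_filter, mem_univ, true_and, Fintype.mem_piFinset]
    exact ⟨fun h b i hi => hi ▸ h i, fun h i => h _ i rfl⟩
  have hcard : ∀ b, (univ.filter fun a : α => ∀ i, φ i = b → a = i).card =
      if b ∈ univ.image φ then 1 else Fintype.card α := by
    intro b
    split_ifs with hb
    · obtain ⟨i, -, rfl⟩ := Finset.mem_image.1 hb
      rw [Finset.card_eq_one]
      refine ⟨i, ?_⟩
      ext a
      simp only [mem_filter, mem_univ, true_and, mem_singleton]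
      exact ⟨fun h => h i rfl, fun h j hj => h.trans (hφ hj).symm⟩
    · rw [Finset.filter_true_of_mem, Finset.card_univ]
      intro a _ i hi
      exact absurd (Finset.mem_image.2 ⟨i, mem_univ _, hi⟩) hb
  have hle : Fintype.card α ≤ Fintype.card β := Fintype.card_le_of_injective φ hφ
  have hcompl : (univ.filter fun b => b ∉ univ.image φ).card =
      Fintype.card β - Fintype.card α := by
    rw [← Finset.compl_filter, Finset.card_compl, Finset.filter_mem_eq_inter,
      Finset.univ_inter, Finset.card_image_of_injective _ hφ, Finset.card_univ]
  rw [hset, Fintype.card_piFinset, Finset.prod_congr rfl fun b _ => hcard b, Finset.prod_ite,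
    Finset.prod_const_one, one_mul, Finset.prod_const, hcompl, ← pow_add,
    Nat.sub_add_cancel hle]

open Classical in
lemma card_not_injective_le (α β : Type) [Fintype α] [Fintype β] :
    (univ.filter fun φ : α → β => ¬ Function.Injective φ).card ≤
      Fintype.card α ^ 2 * Fintype.card β ^ (Fintype.card α - 1) := by
  have hsub : (univ.filter fun φ : α → β => ¬ Function.Injective φ) ⊆
      (univ.filter fun x : α × α => x.1 ≠ x.2).biUnion fun x =>
        univ.filter fun φ : α → β => φ x.1 = φ x.2 := by
    intro φ hφ
    simp only [mem_filter, mem_univ, true_and, Function.Injective, not_forall] at hφ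
    obtain ⟨i, j, hij, hne⟩ := hφ
    simp only [mem_biUnion, mem_filter, mem_univ, true_and]
    exact ⟨(i, j), hne, hij⟩
  refine (Finset.card_le_card hsub).trans ?_
  refine (Finset.card_biUnion_le_card_mul _ _ (Fintype.card β ^ (Fintype.card α - 1)) ?_).trans ?_
  · rintro ⟨i, j⟩ hx
    have hne : i ≠ j := (mem_filter.1 hx).2
    -- A map with `φ i = φ j` is determined by its restriction to the complement of `i`.
    have : Fintype.card ({k // k ≠ i} → β) = Fintype.card β ^ (Fintype.card α - 1) := by
      rw [Fintype.card_fun, Fintype.card_subtype_compl, Fintype.card_subtype_eq]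
    rw [← this, ← Finset.card_univ]
    refine Finset.card_le_card_of_injOn (fun φ k => φ k.1) (fun _ _ => mem_coe.2 (mem_univ _)) ?_
    intro φ hφ ψ hψ h
    have hφ' : φ i = φ j := by simpa using hφ
    have hψ' : ψ i = ψ j := by simpa using hψ
    have hk : ∀ k, k ≠ i → φ k = ψ k := fun k hk => congrFun h ⟨k, hk⟩
    funext k
    by_cases hki : k = i
    · rw [hki, hφ', hψ', hk j hne.symm]
    · exact hk k hki
  · refine Nat.mul_le_mul_right _ ((Finset.card_le_univ _).trans ?_)
    rw [Fintype.card_prod, sq]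

open Classical in
/-- The weight carried by the injective maps is controlled by `PropR`, up to the factor `r ^ r`:
average over all colourings. -/
lemma abs_sum_injective_le {α β : Type} [Fintype α] [Nonempty α] [Fintype β] (H : SimpleGraph α)
    (G : SimpleGraph β) (p δ : ℝ) (hR : PropR H G p δ) (U : α → Finset β) :
    |∑ φ ∈ (Fintype.piFinset U).filter Function.Injective, homWeight H G (p ^ edgeCount H) φ| ≤
      (Fintype.card α : ℝ) ^ Fintype.card α * (δ * (Fintype.card β : ℝ) ^ Fintype.card α) := by
  set w := homWeight H G (p ^ edgeCount H)
  set r := Fintype.card α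
  set n := Fintype.card β
  have hr : (0 : ℝ) < (r : ℝ) ^ n := pow_pos (Nat.cast_pos.2 Fintype.card_pos) _
  let V : (β → α) → α → Finset β := fun f i => (U i).filter fun b => f b = i
  have hV : ∀ f, |∑ φ ∈ Fintype.piFinset (V f), w φ| ≤ δ * (n : ℝ) ^ r := by
    intro f
    rw [← homCount_sub_eq_sum]
    refine hR _ fun i j hij => Finset.disjoint_left.2 fun b hi hj => hij ?_
    exact (mem_filter.1 hi).2.symm.trans (mem_filter.1 hj).2
  -- Double counting of the pairs of a colouring and a map compatible with it.
  have hswap : (∑ f : β → α, ∑ φ ∈ Fintype.piFinset (V f), w φ) * (r : ℝ) ^ r =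
      (r : ℝ) ^ n * ∑ φ ∈ (Fintype.piFinset U).filter Function.Injective, w φ := by
    have h1 : ∀ f : β → α, ∑ φ ∈ Fintype.piFinset (V f), w φ =
        ∑ φ ∈ Fintype.piFinset U, if ∀ i, f (φ i) = i then w φ else 0 := by
      intro f
      rw [← Finset.sum_filter]
      refine Finset.sum_congr ?_ fun _ _ => rfl
      ext φ
      simp [V, forall_and]
    rw [Finset.sum_congr rfl fun f _ => h1 f, Finset.sum_comm, Finset.sum_filter, Finset.sum_mul,
      Finset.mul_sum]
    refine Finset.sum_congr rfl fun φ _ => ?_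
    rw [← Finset.sum_filter, Finset.sum_const, nsmul_eq_mul]
    split_ifs with hφ
    · have := card_colorings_mul φ hφ
      have h2 : ((univ.filter fun f : β → α => ∀ i, f (φ i) = i).card : ℝ) * (r : ℝ) ^ r =
          (r : ℝ) ^ n := by exact_mod_cast this
      rw [← h2]; ring
    · rw [Finset.filter_false_of_mem]
      · simp
      · exact fun f _ hf => hφ (Function.LeftInverse.injective hf)
  have hsum : |∑ f : β → α, ∑ φ ∈ Fintype.piFinset (V f), w φ| ≤
      (r : ℝ) ^ n * (δ * (n : ℝ) ^ r) := by
    refine (Finset.abs_sum_le_sum_abs _ _).trans ((Finset.sum_le_sum fun f _ => hV f).trans ?_)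
    rw [Finset.sum_const, nsmul_eq_mul, Finset.card_univ, Fintype.card_fun, Nat.cast_pow]
  refine le_of_mul_le_mul_left ?_ hr
  rw [← abs_of_pos hr, ← abs_mul, ← hswap, abs_mul, abs_of_pos hr,
    abs_of_nonneg (by positivity : (0 : ℝ) ≤ (r : ℝ) ^ r)]
  calc _ ≤ (r : ℝ) ^ n * (δ * (n : ℝ) ^ r) * (r : ℝ) ^ r := by gcongr
    _ = _ := by ring

/-- For every graph `H` there is `C > 0` depending only on `H` such that for every
`p ∈ [0,1]`, `δ > 0` and every graph `G` satisfying `R_{H,p}(δ)`: for every sequence of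
(not necessarily disjoint) subsets `U₁, …, U_{v(H)}` of `V(G)`,
`|c(H,G;U₁,…,U_{v(H)}) − p^{e(H)} ∏ᵢ |Uᵢ|| ≤ C δ v(G)^{v(H)} + C v(G)^{v(H)−1}`. -/
theorem stmt1 {α : Type} [Fintype α] (H : SimpleGraph α) :
    ∃ C : ℝ, 0 < C ∧ ∀ p : ℝ, 0 ≤ p → p ≤ 1 → ∀ δ : ℝ, 0 < δ →
      ∀ (β : Type) [Fintype β] (G : SimpleGraph β), PropR H G p δ →
        ∀ U : α → Finset β,
          |(homCount H G U : ℝ) - p ^ edgeCount H * ∏ i, ((U i).card : ℝ)| ≤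
            C * δ * (Fintype.card β : ℝ) ^ (Fintype.card α) +
              C * (Fintype.card β : ℝ) ^ (Fintype.card α - 1) := by
  classical
  refine ⟨(Fintype.card α : ℝ) ^ Fintype.card α + (Fintype.card α : ℝ) ^ 2 + 1, by positivity, ?_⟩
  intro p hp0 hp1 δ hδ β _ G hR U
  have h1 : 0 ≤ p ^ edgeCount H := pow_nonneg hp0 _
  have h2 : p ^ edgeCount H ≤ 1 := pow_le_one₀ hp0 hp1
  set A : ℝ := (Fintype.card α : ℝ) ^ Fintype.card α
  set B : ℝ := (Fintype.card α : ℝ) ^ 2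
  have hA : 0 ≤ A := by positivity
  have hB : 0 ≤ B := by positivity
  set X : ℝ := (Fintype.card β : ℝ) ^ Fintype.card α
  set Y : ℝ := (Fintype.card β : ℝ) ^ (Fintype.card α - 1)
  have hX : 0 ≤ X := by positivity
  have hY : 0 ≤ Y := by positivity
  rcases isEmpty_or_nonempty α with hα | hα
  · -- Without vertices in `H` the family `U` is vacuously disjoint.
    refine (hR U fun i => hα.elim i).trans ?_
    have := mul_nonneg hδ.le hX
    nlinarith [mul_nonneg hA this, mul_nonneg hB this, mul_nonneg hA hY, mul_nonneg hB hY]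
  have hinj := abs_sum_injective_le H G p δ hR U
  have hnon : |∑ φ ∈ (Fintype.piFinset U).filter (fun φ => ¬ Function.Injective φ),
      homWeight H G (p ^ edgeCount H) φ| ≤ B * Y := by
    refine (Finset.abs_sum_le_sum_abs _ _).trans
      ((Finset.sum_le_sum fun φ _ => abs_homWeight_le H G h1 h2 φ).trans ?_)
    rw [Finset.sum_const, nsmul_eq_mul, mul_one]
    have := (Finset.card_le_card (Finset.filter_subset_filter
      (fun φ : α → β => ¬ Function.Injective φ) (Finset.subset_univ (Fintype.piFinset U)))).trans
      (card_not_injective_le α β)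
    calc _ ≤ ((Fintype.card α ^ 2 * Fintype.card β ^ (Fintype.card α - 1) : ℕ) : ℝ) :=
          Nat.cast_le.2 this
      _ = B * Y := by simp only [B, Y]; push_cast; rfl
  rw [homCount_sub_eq_sum, ← Finset.sum_filter_add_sum_filter_not _ Function.Injective]
  refine (abs_add_le _ _).trans ((add_le_add hinj hnon).trans ?_)
  have := mul_nonneg hδ.le hX
  nlinarith [mul_nonneg hB this, mul_nonneg hA hY]
end

section
/- Let H be a graph with vertex set {v₁,…,v_r}, let K be a graph on the index set {1,…,r}, and let K' be obtained from K by adding one new edge. There exists a constant C > 0 depending only on H such that for every p ∈ [0,1], every δ > 0, and every graph G satisfying R^{K'}_{H,p}(δ), the following holds: for every sequence of subsets U₁,…,U_r ⊆ V(G) with U_i ∩ U_j = ∅ whenever {i,j} is an edge of K, |c(H,G;U₁,…,U_r) − p^{e(H)}·∏_i|U_i|| ≤ 6·δ·v(G)^r + C·v(G)^{r−1}. -/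
/-!
Write `c(U) - p ^ e(H) ∏ |U i|` as the sum of the weight `W φ = 1[φ is a homomorphism] - p ^ e(H)`
over all maps `φ` with `φ i ∈ U i` for every `i` (`discrepancy_eq_sum`). Let `ab` be the new edge
and `I = U a ∩ U b`. The maps `φ` fall into four classes.

* `φ a ∉ U b`, or `φ a ∈ I` and `φ b ∉ U a`: the hypothesis for `K'` applies to each of these two
  classes, giving an error of `δ n ^ r` each.
* `φ a` and `φ b` are distinct elements of `I`: average over all `S ⊆ I` the sum over the maps with
  `φ a ∈ S` and `φ b ∈ I \ S`. Each such sum is at most `δ n ^ r` in absolute value, and a pair of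
  distinct elements of `I` is separated this way by exactly a quarter of the subsets, which gives
  an error of `4 δ n ^ r` (`abs_sum_offDiag_le`).
* `φ a = φ b`: there are at most `n ^ (r - 1)` such maps (`card_collapsed_le`) and `|W| ≤ 1`, so
  `C = 1` suffices.
-/


open Finset

/-- The quasirandomness property `R^K_{H,p}(δ)`: the count condition holds for all tuples of
subsets `U₁, …, U_{v(H)}` with `Uᵢ ∩ Uⱼ = ∅` whenever `{i,j}` is an edge of `K`. -/
def PropRK {α β : Type} [Fintype α] [Fintype β]
    (H : SimpleGraph α) (K : SimpleGraph α) (G : SimpleGraph β) (p δ : ℝ) : Prop :=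
  ∀ U : α → Finset β, (∀ i j, K.Adj i j → Disjoint (U i) (U j)) →
    |(homCount H G U : ℝ) - p ^ edgeCount H * ∏ i, ((U i).card : ℝ)| ≤
      δ * (Fintype.card β : ℝ) ^ (Fintype.card α)

/-- For distinct `x, y ∈ I`, a quarter of the subsets of `I` contain `x` but not `y`. -/
lemma four_mul_card_separating {β : Type} [DecidableEq β] (I : Finset β) {x y : β}
    (hx : x ∈ I) (hy : y ∈ I) (hxy : x ≠ y) :
    4 * #{S ∈ I.powerset | x ∈ S ∧ y ∈ I \ S} = 2 ^ #I := by
  have h : {S ∈ I.powerset | x ∈ S ∧ y ∈ I \ S} = Finset.Icc {x} (I.erase y) := by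
    ext S
    simp only [mem_filter, mem_powerset, mem_sdiff, Finset.mem_Icc,
      singleton_subset_iff, subset_erase]
    tauto
  have hsub : ({x} : Finset β) ⊆ I.erase y := by simp [hx, hxy]
  have hcard : 2 ≤ #I := Finset.one_lt_card.2 ⟨x, hx, y, hy, hxy⟩
  rw [h, Finset.card_Icc_finset hsub, card_erase_of_mem hy, card_singleton]
  obtain ⟨k, hk⟩ := Nat.exists_eq_add_of_le hcard
  rw [hk, show 2 + k - 1 - 1 = k by omega, pow_add]
  norm_num

/-- If, for every `S ⊆ I`, the weights of the elements separated by `S` sum to at most `D` in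
absolute value, then averaging over `S` bounds the total weight of the elements with
`u φ ≠ v φ` by `4 * D`. -/
lemma abs_sum_offDiag_le {ι β : Type} [DecidableEq β] (P : Finset ι) (W : ι → ℝ) (u v : ι → β)
    (I : Finset β) (D : ℝ)
    (h : ∀ S ⊆ I, |∑ φ ∈ P with u φ ∈ S ∧ v φ ∈ I \ S, W φ| ≤ D) :
    |∑ φ ∈ P with u φ ∈ I ∧ v φ ∈ I ∧ u φ ≠ v φ, W φ| ≤ 4 * D := by
  have key : 4 * ∑ S ∈ I.powerset, ∑ φ ∈ P with u φ ∈ S ∧ v φ ∈ I \ S, W φ =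
      2 ^ #I * ∑ φ ∈ P with u φ ∈ I ∧ v φ ∈ I ∧ u φ ≠ v φ, W φ := by
    simp_rw [sum_filter]
    rw [sum_comm, mul_sum, mul_sum]
    refine sum_congr rfl fun φ _ => ?_
    rw [← sum_filter, sum_const, nsmul_eq_mul, ← mul_assoc]
    split_ifs with hφ
    · have := four_mul_card_separating I hφ.1 hφ.2.1 hφ.2.2
      congr 1
      exact_mod_cast this
    · have : {S ∈ I.powerset | u φ ∈ S ∧ v φ ∈ I \ S} = ∅ := by
        refine filter_eq_empty_iff.2 fun S hS hS' => hφ ?_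
        rw [mem_sdiff] at hS'
        exact ⟨mem_powerset.1 hS hS'.1, hS'.2.1, fun e => hS'.2.2 (e ▸ hS'.1)⟩
      rw [this]
      simp
  have hle : |∑ S ∈ I.powerset, ∑ φ ∈ P with u φ ∈ S ∧ v φ ∈ I \ S, W φ| ≤ 2 ^ #I * D := by
    refine (abs_sum_le_sum_abs _ _).trans
      ((sum_le_sum fun S hS => h S (mem_powerset.1 hS)).trans_eq ?_)
    simp [card_powerset]
  have hpos : (0 : ℝ) < 2 ^ #I := by positivity
  refine le_of_mul_le_mul_left ?_ hpos
  rw [← abs_of_pos hpos, ← abs_mul, ← key, abs_mul, abs_of_pos hpos,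
    abs_of_pos (by norm_num : (0 : ℝ) < 4)]
  linarith

lemma discrepancy_eq_sum {α β : Type} [Fintype α] [DecidableEq α] [Fintype β]
    (H : SimpleGraph α) (G : SimpleGraph β) (q : ℝ) (U : α → Finset β) :
    (homCount H G U : ℝ) - q * ∏ i, ((U i).card : ℝ) =
      ∑ φ ∈ Fintype.piFinset U, homWeight H G q φ := by
  classical
  have hcount : (homCount H G U : ℝ) = ∑ φ ∈ Fintype.piFinset U,
      if ∀ i j, H.Adj i j → G.Adj (φ i) (φ j) then (1 : ℝ) else 0 := by
    rw [sum_boole, homCount, Nat.card_eq_fintype_card, Fintype.card_subtype]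
    congr 2
    ext φ
    simp [Fintype.mem_piFinset]
  simp only [homWeight]
  rw [sum_sub_distrib, sum_const, nsmul_eq_mul, Fintype.card_piFinset, hcount, mul_comm q]
  push_cast
  congr!

/-- A map identifying `a` and `b` is determined by its values away from `b`. -/
lemma card_collapsed_le {α β : Type} [Fintype α] [DecidableEq α] [Fintype β] [DecidableEq β]
    (P : Finset (α → β)) {a b : α} (hab : a ≠ b) :
    #{φ ∈ P | φ a = φ b} ≤ Fintype.card β ^ (Fintype.card α - 1) := by
  have hc : Fintype.card ({i : α // i ≠ b} → β) = Fintype.card β ^ (Fintype.card α - 1) := by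
    rw [Fintype.card_fun]
    congr 1
    simp [Fintype.card_subtype_compl]
  rw [← hc, ← Finset.card_univ]
  refine Finset.card_le_card_of_injOn (fun φ i => φ i.1)
    (fun _ _ => Finset.mem_coe.2 (mem_univ _)) ?_
  intro φ hφ ψ hψ e
  have hφ := (mem_filter.1 (Finset.mem_coe.1 hφ)).2
  have hψ := (mem_filter.1 (Finset.mem_coe.1 hψ)).2
  have hoff : ∀ i, i ≠ b → φ i = ψ i := fun i hi => congrFun e ⟨i, hi⟩
  funext i
  by_cases hi : i = b
  · rw [hi, ← hφ, ← hψ, hoff a hab]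
  · exact hoff i hi

/-- `R^{K'}` bounds the weight of the maps sending `a` and `b` into prescribed disjoint sets. -/
lemma abs_sum_disjoint_le {α β : Type} [Fintype α] [DecidableEq α] [Fintype β] [DecidableEq β]
    {H K K' : SimpleGraph α} {G : SimpleGraph β} {a b : α} (hab : a ≠ b)
    (hK : ∀ i j, K'.Adj i j ↔ (K.Adj i j ∨ (i = a ∧ j = b) ∨ (i = b ∧ j = a)))
    {p δ : ℝ} (hG : PropRK H K' G p δ) {U : α → Finset β}
    (hU : ∀ i j, K.Adj i j → Disjoint (U i) (U j)) {X Y : Finset β} (hXY : Disjoint X Y) :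
    |∑ φ ∈ Fintype.piFinset U with φ a ∈ X ∧ φ b ∈ Y, homWeight H G (p ^ edgeCount H) φ| ≤
      δ * (Fintype.card β : ℝ) ^ (Fintype.card α) := by
  let V : α → Finset β := fun i => if i = a then U i ∩ X else if i = b then U i ∩ Y else U i
  have hVU : ∀ i, V i ⊆ U i := by
    intro i
    simp only [V]
    split_ifs
    exacts [inter_subset_left, inter_subset_left, Subset.rfl]
  have hVa : V a ⊆ X := by simp [V]
  have hVb : V b ⊆ Y := by simp [V, hab.symm]
  have hV : ∀ i j, K'.Adj i j → Disjoint (V i) (V j) := by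
    intro i j hij
    rcases (hK i j).1 hij with h | ⟨rfl, rfl⟩ | ⟨rfl, rfl⟩
    · exact (hU i j h).mono (hVU i) (hVU j)
    · exact hXY.mono hVa hVb
    · exact hXY.symm.mono hVb hVa
  have hP : {φ ∈ Fintype.piFinset U | φ a ∈ X ∧ φ b ∈ Y} = Fintype.piFinset V := by
    ext φ
    simp only [mem_filter, Fintype.mem_piFinset]
    constructor
    · rintro ⟨h, hX, hY⟩ i
      simp only [V]
      split_ifs with h1 h2
      · subst h1; exact mem_inter.2 ⟨h _, hX⟩
      · subst h2; exact mem_inter.2 ⟨h _, hY⟩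
      · exact h i
    · exact fun h => ⟨fun i => hVU i (h i), hVa (h a), hVb (h b)⟩
  rw [hP, ← discrepancy_eq_sum]
  exact hG V hV

/-- Let `H` be a graph on a vertex set indexing graphs `K ⊆ K'`, where `K'` is obtained
from `K` by adding one new edge. There is `C > 0` depending only on `H` such that for every
`p ∈ [0,1]`, `δ > 0` and graph `G` satisfying `R^{K'}_{H,p}(δ)`: whenever `U₁, …, U_r` are
subsets of `V(G)` with `Uᵢ ∩ Uⱼ = ∅` for every edge `{i,j}` of `K`,
`|c(H,G;U₁,…,U_r) − p^{e(H)} ∏ᵢ |Uᵢ|| ≤ 6 δ v(G)^r + C v(G)^{r−1}`. -/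
theorem stmt2 {α : Type} [Fintype α] (H : SimpleGraph α) :
    ∃ C : ℝ, 0 < C ∧ ∀ K K' : SimpleGraph α,
      (∃ a b : α, a ≠ b ∧ ¬ K.Adj a b ∧
        ∀ i j, K'.Adj i j ↔ (K.Adj i j ∨ (i = a ∧ j = b) ∨ (i = b ∧ j = a))) →
      ∀ p : ℝ, 0 ≤ p → p ≤ 1 → ∀ δ : ℝ, 0 < δ →
        ∀ (β : Type) [Fintype β] (G : SimpleGraph β), PropRK H K' G p δ →
          ∀ U : α → Finset β, (∀ i j, K.Adj i j → Disjoint (U i) (U j)) →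
            |(homCount H G U : ℝ) - p ^ edgeCount H * ∏ i, ((U i).card : ℝ)| ≤
              6 * δ * (Fintype.card β : ℝ) ^ (Fintype.card α) +
                C * (Fintype.card β : ℝ) ^ (Fintype.card α - 1) := by
  classical
  refine ⟨1, one_pos, ?_⟩
  rintro K K' ⟨a, b, hab, -, hK⟩ p hp0 hp1 δ - β _ G hG U hU
  rw [discrepancy_eq_sum]
  set P := Fintype.piFinset U with hP
  set W := homWeight H G (p ^ edgeCount H) with hW
  set D := δ * (Fintype.card β : ℝ) ^ (Fintype.card α) with hD
  set I := U a ∩ U b with hI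
  have hdisj : ∀ {X Y : Finset β}, Disjoint X Y →
      |∑ φ ∈ P with φ a ∈ X ∧ φ b ∈ Y, W φ| ≤ D := fun h =>
    abs_sum_disjoint_le hab hK hG hU h
  have h1 := hdisj (X := U a \ U b) (Y := U b) sdiff_disjoint
  have h2 := hdisj (X := I) (Y := U b \ U a)
    (disjoint_sdiff.mono_left inter_subset_left)
  have h3 := abs_sum_offDiag_le P W (fun φ => φ a) (fun φ => φ b) I D
    fun S _ => hdisj disjoint_sdiff
  have h4 : |∑ φ ∈ P with φ a = φ b, W φ| ≤
      (Fintype.card β : ℝ) ^ (Fintype.card α - 1) := by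
    refine (abs_sum_le_sum_abs _ _).trans ((sum_le_sum fun φ _ => abs_homWeight_le H G
      (pow_nonneg hp0 _) (pow_le_one₀ hp0 hp1) φ).trans ?_)
    rw [sum_const, nsmul_eq_mul, mul_one]
    exact_mod_cast card_collapsed_le P hab
  have hsplit : ∑ φ ∈ P, W φ =
      ∑ φ ∈ P with φ a ∈ U a \ U b ∧ φ b ∈ U b, W φ +
      ∑ φ ∈ P with φ a ∈ I ∧ φ b ∈ U b \ U a, W φ +
      ∑ φ ∈ P with φ a ∈ I ∧ φ b ∈ I ∧ φ a ≠ φ b, W φ +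
      ∑ φ ∈ P with φ a = φ b, W φ := by
    simp_rw [sum_filter]
    rw [← sum_add_distrib, ← sum_add_distrib, ← sum_add_distrib]
    refine sum_congr rfl fun φ hφ => ?_
    have ha : φ a ∈ U a := Fintype.mem_piFinset.1 hφ a
    have hb : φ b ∈ U b := Fintype.mem_piFinset.1 hφ b
    simp only [hI, mem_sdiff, mem_inter, ha, hb, true_and, and_true]
    by_cases e : φ a = φ b
    · simp [e, e ▸ ha, hb]
    · by_cases h1 : φ a ∈ U b <;> by_cases h2 : φ b ∈ U a <;> simp [e, h1, h2]
  rw [hsplit, mul_assoc, ← hD, one_mul]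
  rw [abs_le] at *
  constructor <;> linarith [h1.1, h1.2, h2.1, h2.2, h3.1, h3.2, h4.1, h4.2]
end

section
/- If a graph G satisfies P*_{K₂,p}(δ) for some p ∈ [0,1] and δ > 0, then for every graph H, G satisfies R'_{H,p}(4·e(H)·δ); that is, for every sequence of (not necessarily disjoint) subsets U₁,…,U_{v(H)} ⊆ V(G), c(H,G;U₁,…,U_{v(H)}) = p^{e(H)}·∏_i|U_i| ± 4·e(H)·δ·v(G)^{v(H)}. -/
/-!
Write `w a b` for `[a ~ b] - p` and `F(A, B)` for the sum of `w` over `A × B`. The hypothesis bounds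
`F(U, U)` by `δ n²` for every `U`. Since `w` is symmetric, the identity
`2 F(A, B) = F(A ∪ B, A ∪ B) + F(A ∩ B, A ∩ B) - F(A \ B, A \ B) - F(B \ A, B \ A)`
gives `|F(A, B)| ≤ 2 δ n²` for all `A` and `B` (`abs_pairSum_le`).

The homomorphisms are then counted by adding the edges of `H` one at a time. Adding an edge `uv`
changes the count `N` to `p N` up to the sum of `w (φ u) (φ v)` over the maps `φ` satisfying the
earlier constraints. Once `φ` is fixed off `{u, v}`, every earlier constraint involves at most one of
`φ u`, `φ v`, so the admissible pairs `(φ u, φ v)` form a rectangle `A × B`, and this error is at most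
`2 δ n ^ v(H)` (`abs_step_le`). As `0 ≤ p ≤ 1`, the errors add up to at most `2 e(H) δ n ^ v(H)`.
-/

open Finset

open Classical in
/-- The sum of `[a ~ b] - p` over `(a, b) ∈ A × B`: the deviation of the number of ordered adjacent
pairs from its expected value. -/
noncomputable def pairSum {β : Type} [Fintype β] (G : SimpleGraph β) (p : ℝ) (A B : Finset β) : ℝ :=
  ∑ a ∈ A, ∑ b ∈ B, ((if G.Adj a b then (1 : ℝ) else 0) - p)

/-- The map `φ` sends each vertex into its prescribed set and each pair in `S` to an edge of `G`. -/
def IsPartialHom {α β : Type} (G : SimpleGraph β) (U : α → Finset β) (S : Finset (Sym2 α))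
    (φ : α → β) : Prop :=
  (∀ i, φ i ∈ U i) ∧ ∀ e ∈ S, e.map φ ∈ G.edgeSet

open Classical in
theorem two_mul_inducedEdgeCount {β : Type} [Fintype β] (G : SimpleGraph β) (U : Finset β) :
    2 * (inducedEdgeCount G U : ℝ) = ∑ a ∈ U, ∑ b ∈ U, (if G.Adj a b then (1 : ℝ) else 0) := by
  have h := (G.induce (U : Set β)).sum_degrees_eq_twice_card_edges
  have h2 : inducedEdgeCount G U = #(G.induce (U : Set β)).edgeFinset := by
    rw [inducedEdgeCount, Nat.card_eq_fintype_card, SimpleGraph.edgeFinset_card]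
  rw [h2]
  have h3 : (2 * (#(G.induce (U : Set β)).edgeFinset : ℝ)) =
      ((2 * #(G.induce (U : Set β)).edgeFinset : ℕ) : ℝ) := by push_cast; rfl
  rw [h3, ← h]
  push_cast
  rw [← Finset.sum_coe_sort U]
  refine Finset.sum_congr rfl fun a _ => ?_
  rw [← SimpleGraph.card_neighborFinset_eq_degree, SimpleGraph.neighborFinset_eq_filter,
    Finset.card_filter, ← Finset.sum_coe_sort U]
  push_cast
  rfl

theorem pairSum_self {β : Type} [Fintype β] (G : SimpleGraph β) (p : ℝ) (U : Finset β) :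
    pairSum G p U U = 2 * (inducedEdgeCount G U : ℝ) - p * (U.card : ℝ) ^ 2 := by
  classical
  rw [two_mul_inducedEdgeCount, pairSum]
  simp only [Finset.sum_sub_distrib, Finset.sum_const, nsmul_eq_mul]
  ring

theorem pairSum_comm {β : Type} [Fintype β] (G : SimpleGraph β) (p : ℝ) (A B : Finset β) :
    pairSum G p A B = pairSum G p B A := by
  rw [pairSum, pairSum, Finset.sum_comm]
  refine Finset.sum_congr rfl fun b _ => Finset.sum_congr rfl fun a _ => ?_
  rw [G.adj_comm a b]

open Classical in
theorem pairSum_union_left {β : Type} [Fintype β] (G : SimpleGraph β) (p : ℝ) {A B : Finset β}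
    (h : Disjoint A B) (C : Finset β) :
    pairSum G p (A ∪ B) C = pairSum G p A C + pairSum G p B C :=
  Finset.sum_union h

open Classical in
theorem pairSum_union_right {β : Type} [Fintype β] (G : SimpleGraph β) (p : ℝ) {A B : Finset β}
    (h : Disjoint A B) (C : Finset β) :
    pairSum G p C (A ∪ B) = pairSum G p C A + pairSum G p C B := by
  rw [pairSum_comm, pairSum_union_left G p h, pairSum_comm G p A, pairSum_comm G p B]

/-- The hereditary property controls the density between any two, possibly overlapping, sets. -/
theorem abs_pairSum_le {β : Type} [Fintype β] {G : SimpleGraph β} {p δ : ℝ}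
    (hG : PropStar G p δ) (A B : Finset β) :
    |pairSum G p A B| ≤ 2 * δ * (Fintype.card β : ℝ) ^ 2 := by
  classical
  have key : ∀ U, |pairSum G p U U| ≤ δ * (Fintype.card β : ℝ) ^ 2 := fun U => by
    rw [pairSum_self]; exact hG U
  have d1 : Disjoint (A \ B) (A ∩ B) := Finset.disjoint_sdiff_inter A B
  have d2 : Disjoint (B \ A) (A ∩ B) := by
    rw [Finset.inter_comm]; exact Finset.disjoint_sdiff_inter B A
  have d3 : Disjoint (A \ B ∪ A ∩ B) (B \ A) := by
    rw [Finset.sdiff_union_inter]; exact Finset.disjoint_sdiff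
  have eA : A = A \ B ∪ A ∩ B := (Finset.sdiff_union_inter A B).symm
  have eB : B = B \ A ∪ A ∩ B := by
    rw [Finset.inter_comm]; exact (Finset.sdiff_union_inter B A).symm
  have h0 : pairSum G p A B = pairSum G p (A \ B ∪ A ∩ B) (B \ A ∪ A ∩ B) := by
    rw [← eA, ← eB]
  have h1 := key ((A \ B ∪ A ∩ B) ∪ (B \ A))
  have h2 := key (A ∩ B)
  have h3 := key (A \ B)
  have h4 := key (B \ A)
  rw [h0]
  simp only [pairSum_union_left G p d1, pairSum_union_left G p d3,
    pairSum_union_right G p d1, pairSum_union_right G p d2, pairSum_union_right G p d3] at h1 ⊢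
  rw [pairSum_comm G p (B \ A) (A \ B), pairSum_comm G p (A ∩ B) (A \ B),
    pairSum_comm G p (B \ A) (A ∩ B)] at h1
  rw [abs_le] at *
  constructor <;> linarith [h1.1, h1.2, h2.1, h2.2, h3.1, h3.2, h4.1, h4.2]

/-- Resampling one coordinate of a uniformly random map leaves its distribution unchanged. -/
theorem sum_sum_update {α β : Type} [Fintype α] [DecidableEq α] [Fintype β]
    (u : α) (f : (α → β) → ℝ) :
    ∑ φ : α → β, ∑ a, f (Function.update φ u a) = (Fintype.card β : ℝ) * ∑ φ, f φ := by
  have h : ∑ x : (α → β) × β, f (Function.update x.1 u x.2) = ∑ x : (α → β) × β, f x.1 := by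
    -- `(φ, a) ↦ (φ[u := a], φ u)` is an involution.
    refine Finset.sum_nbij' (fun x => (Function.update x.1 u x.2, x.1 u))
      (fun x => (Function.update x.1 u x.2, x.1 u)) ?_ ?_ ?_ ?_ ?_ <;> simp
  rw [Fintype.sum_prod_type, Fintype.sum_prod_type] at h
  rw [h]
  simp [Finset.mul_sum]

/-- If `uv` is not among the constraining pairs, then with `φ` fixed off `{u, v}` no constraint sees
both coordinates, so the admissible values of `(φ u, φ v)` form a combinatorial rectangle. -/
theorem isPartialHom_rectangle {α β : Type} [DecidableEq α] {G : SimpleGraph β}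
    {U : α → Finset β} {S : Finset (Sym2 α)} {u v : α} (huv : u ≠ v) (hS : s(u, v) ∉ S)
    (φ : α → β) {a b a' b' : β}
    (h : IsPartialHom G U S (Function.update (Function.update φ u a) v b))
    (h' : IsPartialHom G U S (Function.update (Function.update φ u a') v b')) :
    IsPartialHom G U S (Function.update (Function.update φ u a) v b') := by
  have e1 : ∀ i ≠ v, Function.update (Function.update φ u a) v b' i =
      Function.update (Function.update φ u a) v b i := fun i hi => by simp [hi]
  have e2 : ∀ i ≠ u, Function.update (Function.update φ u a) v b' i =
      Function.update (Function.update φ u a') v b' i := fun i hi => by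
    by_cases hv : i = v
    · subst hv; simp
    · simp [hv, hi]
  refine ⟨fun i => ?_, fun e he => ?_⟩
  · by_cases hi : i = v
    · rw [e2 i (hi ▸ huv.symm)]; exact h'.1 i
    · rw [e1 i hi]; exact h.1 i
  · by_cases hv : v ∈ e
    · have hu : u ∉ e := fun hu => hS ((Sym2.mem_and_mem_iff huv).1 ⟨hu, hv⟩ ▸ he)
      rw [Sym2.map_congr (fun i hi => e2 i (fun hc => hu (hc ▸ hi)))]
      exact h'.2 e he
    · rw [Sym2.map_congr (fun i hi => e1 i (fun hc => hv (hc ▸ hi)))]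
      exact h.2 e he

open Classical in
/-- The error made when a single pair `uv` is replaced by the constant `p`. -/
theorem abs_step_le {α β : Type} [Fintype α] [Fintype β] {G : SimpleGraph β} {p δ : ℝ}
    (hδ : 0 < δ) (hG : PropStar G p δ) (U : α → Finset β) (S : Finset (Sym2 α)) {u v : α}
    (huv : u ≠ v) (hS : s(u, v) ∉ S) :
    |∑ φ : α → β, if IsPartialHom G U S φ then
        ((if G.Adj (φ u) (φ v) then (1 : ℝ) else 0) - p) else 0| ≤
      2 * δ * (Fintype.card β : ℝ) ^ Fintype.card α := by
  set f : (α → β) → ℝ := fun φ => if IsPartialHom G U S φ then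
        ((if G.Adj (φ u) (φ v) then (1 : ℝ) else 0) - p) else 0 with hf
  change |∑ φ, f φ| ≤ _
  have inner : ∀ φ : α → β, |∑ a, ∑ b, f (Function.update (Function.update φ u a) v b)| ≤
      2 * δ * (Fintype.card β : ℝ) ^ 2 := by
    intro φ
    -- The two projections of the rectangle of admissible pairs.
    let A : Finset β :=
      {a | ∃ b, IsPartialHom G U S (Function.update (Function.update φ u a) v b)}
    let B : Finset β :=
      {b | ∃ a, IsPartialHom G U S (Function.update (Function.update φ u a) v b)}
    have hAB : ∀ a b, IsPartialHom G U S (Function.update (Function.update φ u a) v b) ↔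
        a ∈ A ∧ b ∈ B := by
      intro a b
      simp only [A, B, Finset.mem_filter, Finset.mem_univ, true_and]
      exact ⟨fun h => ⟨⟨b, h⟩, ⟨a, h⟩⟩,
        fun ⟨⟨_, h⟩, ⟨_, h'⟩⟩ => isPartialHom_rectangle huv hS φ h h'⟩
    have : ∑ a, ∑ b, f (Function.update (Function.update φ u a) v b) = pairSum G p A B := by
      simp only [hf, hAB, Function.update_self, Function.update_of_ne huv]
      rw [pairSum, ← Finset.univ_inter A, ← Finset.sum_ite_mem]
      refine Finset.sum_congr rfl fun a _ => ?_
      by_cases ha : a ∈ A <;> simp [ha]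
    rw [this]
    exact abs_pairSum_le hG A B
  have avg : ∑ φ : α → β, ∑ a, ∑ b, f (Function.update (Function.update φ u a) v b) =
      (Fintype.card β : ℝ) ^ 2 * ∑ φ, f φ := by
    rw [sum_sum_update u (fun φ => ∑ b, f (Function.update φ v b)), sum_sum_update v f]
    ring
  have tot : (Fintype.card β : ℝ) ^ 2 * |∑ φ, f φ| ≤
      (Fintype.card β : ℝ) ^ 2 * (2 * δ * (Fintype.card β : ℝ) ^ Fintype.card α) := by
    calc (Fintype.card β : ℝ) ^ 2 * |∑ φ, f φ|
        = |∑ φ : α → β, ∑ a, ∑ b, f (Function.update (Function.update φ u a) v b)| := by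
          rw [avg, abs_mul, abs_of_nonneg (sq_nonneg (Fintype.card β : ℝ))]
      _ ≤ ∑ φ : α → β, |∑ a, ∑ b, f (Function.update (Function.update φ u a) v b)| :=
          Finset.abs_sum_le_sum_abs _ _
      _ ≤ ∑ φ : α → β, 2 * δ * (Fintype.card β : ℝ) ^ 2 := Finset.sum_le_sum fun φ _ => inner φ
      _ = _ := by
          rw [Finset.sum_const, nsmul_eq_mul, Finset.card_univ, Fintype.card_fun]
          push_cast
          ring
  rcases isEmpty_or_nonempty β with hβ | hβ
  · -- There are no maps at all, because `α` contains `u`.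
    have : IsEmpty (α → β) := ⟨fun φ => hβ.elim (φ u)⟩
    rw [Finset.univ_eq_empty, Finset.sum_empty, abs_zero]
    positivity
  · exact le_of_mul_le_mul_left tot (by positivity)

open Classical in
/-- The counting lemma for an arbitrary set of non-diagonal pairs, by induction on that set. -/
theorem abs_count_sub_le {α β : Type} [Fintype α] [Fintype β] {G : SimpleGraph β} {p δ : ℝ}
    (hp0 : 0 ≤ p) (hp1 : p ≤ 1) (hδ : 0 < δ) (hG : PropStar G p δ) (U : α → Finset β)
    (S : Finset (Sym2 α)) (hS : ∀ e ∈ S, ¬ e.IsDiag) :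
    |(∑ φ : α → β, if IsPartialHom G U S φ then (1 : ℝ) else 0) -
        p ^ #S * ∏ i, ((U i).card : ℝ)| ≤
      2 * (#S : ℝ) * δ * (Fintype.card β : ℝ) ^ Fintype.card α := by
  induction S using Finset.induction_on with
  | empty =>
    have : (∑ φ : α → β, if IsPartialHom G U ∅ φ then (1 : ℝ) else 0) =
        ∏ i, ((U i).card : ℝ) := by
      rw [Finset.sum_boole, ← Nat.cast_prod, ← Fintype.card_piFinset]
      congr 2
      ext φ
      simp [IsPartialHom]
    rw [this]
    simp
  | insert e S he ih =>
    have ih := ih fun e' h' => hS e' (Finset.mem_insert_of_mem h')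
    have hd := hS e (Finset.mem_insert_self e S)
    induction e using Sym2.ind with
    | _ u v =>
    have huv : u ≠ v := by simpa using hd
    have step := abs_step_le hδ hG U S huv he
    have hsum : (∑ φ : α → β, if IsPartialHom G U S φ then
          ((if G.Adj (φ u) (φ v) then (1 : ℝ) else 0) - p) else 0) =
        (∑ φ : α → β, if IsPartialHom G U (insert s(u, v) S) φ then (1 : ℝ) else 0) -
          p * ∑ φ : α → β, if IsPartialHom G U S φ then (1 : ℝ) else 0 := by
      rw [Finset.mul_sum, ← Finset.sum_sub_distrib]
      refine Finset.sum_congr rfl fun φ _ => ?_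
      have : IsPartialHom G U (insert s(u, v) S) φ ↔
          IsPartialHom G U S φ ∧ G.Adj (φ u) (φ v) := by
        simp only [IsPartialHom, Finset.forall_mem_insert, Sym2.map_mk, SimpleGraph.mem_edgeSet]
        tauto
      rw [this]
      by_cases h1 : IsPartialHom G U S φ <;> by_cases h2 : G.Adj (φ u) (φ v) <;> simp [h1, h2]
    rw [hsum] at step
    rw [Finset.card_insert_of_notMem he]
    set N' := ∑ φ : α → β, if IsPartialHom G U (insert s(u, v) S) φ then (1 : ℝ) else 0
    set N := ∑ φ : α → β, if IsPartialHom G U S φ then (1 : ℝ) else 0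
    set P := ∏ i, ((U i).card : ℝ)
    calc |N' - p ^ (#S + 1) * P| = |(N' - p * N) + p * (N - p ^ #S * P)| := by
          congr 1; ring
      _ ≤ |N' - p * N| + |p * (N - p ^ #S * P)| := abs_add_le _ _
      _ = |N' - p * N| + p * |N - p ^ #S * P| := by rw [abs_mul, abs_of_nonneg hp0]
      _ ≤ |N' - p * N| + |N - p ^ #S * P| := by
          gcongr; exact mul_le_of_le_one_left (abs_nonneg _) hp1
      _ ≤ _ := by push_cast; linarith

/-- If `G` satisfies `P*_{K₂,p}(δ)` then for every graph `H`, `G` satisfies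
`R'_{H,p}(4 e(H) δ)`. -/
theorem stmt4 {β : Type} [Fintype β] (G : SimpleGraph β) (p δ : ℝ)
    (hp0 : 0 ≤ p) (hp1 : p ≤ 1) (hδ : 0 < δ) (hG : PropStar G p δ) :
    ∀ (α : Type) [Fintype α] (H : SimpleGraph α),
      PropR' H G p (4 * (edgeCount H : ℝ) * δ) := by
  classical
  intro α _ H U
  have hcount : (homCount H G U : ℝ) =
      ∑ φ : α → β, if IsPartialHom G U H.edgeFinset φ then (1 : ℝ) else 0 := by
    rw [homCount, Finset.sum_boole, Nat.card_eq_fintype_card, Fintype.card_subtype]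
    congr 2
    ext φ
    simp only [IsPartialHom, Sym2.forall, SimpleGraph.mem_edgeFinset, SimpleGraph.mem_edgeSet,
      Sym2.map_mk]
  have hcard : edgeCount H = #H.edgeFinset := by
    rw [edgeCount, Nat.card_eq_fintype_card, SimpleGraph.edgeFinset_card]
  have h := abs_count_sub_le hp0 hp1 hδ hG U H.edgeFinset fun e he =>
    H.not_isDiag_of_mem_edgeFinset he
  rw [hcount, hcard]
  refine h.trans ?_
  gcongr
  norm_num
end

section
/- Let G be a graph, p ∈ [0,1], and α ≥ 0, and suppose that for every pair of subsets A, B ⊆ V(G) one has |e(A,B) − p·|A|·|B|| ≤ α·v(G)². Then for every graph H and every sequence of subsets U₁,…,U_{v(H)} ⊆ V(G), |c(H,G;U₁,…,U_{v(H)}) − p^{e(H)}·∏_i|U_i|| ≤ e(H)·α·v(G)^{v(H)}. -/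
/-!
The proof removes the edges of `H` one at a time. If `u v` is an edge of `H` and `H'` is `H` without
it, then `|c(H) - p c(H')| ≤ α v(G)^{v(H)}` (`homCount_delete_edge`): fix the images of all vertices
other than `u` and `v`. Since `u` and `v` are not adjacent in `H'`, the pairs `(x, y)` of images of
`u, v` extending this choice to a homomorphism of `H'` form a product `A × B`, and those extending it
to a homomorphism of `H` are the edges between `A` and `B`, so the contribution of this choice is
`e(A, B) - p |A| |B|`. As `p ≤ 1`, these errors add up to at most `e(H) α v(G)^{v(H)}` by induction.

To avoid restricting maps to `V(H) \ {u, v}`, the sum runs over all maps `φ`, with the values at `u`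
and `v` resampled; this counts every term `v(G)²` times (`sum_update`).
-/

open Finset

/-- `e(A,B)`: the number of ordered pairs `(a,b) ∈ A × B` with `{a,b}` an edge of `G`
(edges inside `A ∩ B` are counted twice). -/
noncomputable def pairEdgeCount {β : Type} [Fintype β] (G : SimpleGraph β)
    (A B : Finset β) : ℕ :=
  Nat.card {ab : β × β // ab.1 ∈ A ∧ ab.2 ∈ B ∧ G.Adj ab.1 ab.2}

/-- The membership and adjacency conditions defining the maps counted by `homCount`. -/
def IsHomIn {α β : Type} (H : SimpleGraph α) (G : SimpleGraph β) (U : α → Finset β)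
    (φ : α → β) : Prop :=
  (∀ i, φ i ∈ U i) ∧ ∀ i j, H.Adj i j → G.Adj (φ i) (φ j)

open Classical in
lemma homCount_eq_sum {α β : Type} [Fintype α] [Fintype β]
    (H : SimpleGraph α) (G : SimpleGraph β) (U : α → Finset β) :
    (homCount H G U : ℝ) = ∑ φ : α → β, if IsHomIn H G U φ then (1 : ℝ) else 0 := by
  unfold homCount
  rw [Nat.card_eq_fintype_card, Fintype.card_subtype, Finset.sum_boole]
  unfold IsHomIn
  congr!

open Classical in
lemma pairEdgeCount_eq_sum {β : Type} [Fintype β] (G : SimpleGraph β) (A B : Finset β) :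
    (pairEdgeCount G A B : ℝ) =
      ∑ x : β, ∑ y : β, if x ∈ A ∧ y ∈ B ∧ G.Adj x y then (1 : ℝ) else 0 := by
  unfold pairEdgeCount
  rw [Nat.card_eq_fintype_card, Fintype.card_subtype, ← Fintype.sum_prod_type',
    Finset.sum_boole]

/-- Resampling one coordinate of a function counts every function `|β|` times, because
`(φ, x) ↦ (φ[u := x], φ u)` is an involution. -/
lemma sum_update {α β : Type} [Fintype α] [DecidableEq α] [Fintype β] (u : α)
    (f : (α → β) → ℝ) :
    ∑ φ : α → β, ∑ x : β, f (Function.update φ u x) = (Fintype.card β : ℝ) * ∑ φ, f φ := by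
  let e : (α → β) × β → (α → β) × β := fun q => (Function.update q.1 u q.2, q.1 u)
  have he : Function.Involutive e := by
    rintro ⟨φ, x⟩
    simp [e]
  have h := Equiv.sum_comp he.toPerm (fun q : (α → β) × β => f q.1)
  rw [Fintype.sum_prod_type, Fintype.sum_prod_type] at h
  simp only [Function.Involutive.coe_toPerm, e] at h
  rw [h]
  simp [Finset.mul_sum]

/-- With all values of `φ` outside the nonadjacent vertices `u, v` fixed, the conditions on the
images of `u` and `v` are independent of each other. -/
lemma isHomIn_update_iff {α β : Type} [DecidableEq α] (H : SimpleGraph α)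
    (G : SimpleGraph β) (U : α → Finset β) {u v : α} (huv : u ≠ v) (hn : ¬ H.Adj u v)
    (φ : α → β) (x y : β) :
    IsHomIn H G U (Function.update (Function.update φ u x) v y) ↔
      ((∀ i, i ≠ u → i ≠ v → φ i ∈ U i) ∧
        (∀ i j, i ≠ u → i ≠ v → j ≠ u → j ≠ v → H.Adj i j → G.Adj (φ i) (φ j))) ∧
      (x ∈ U u ∧ ∀ j, H.Adj u j → G.Adj x (φ j)) ∧
      (y ∈ U v ∧ ∀ j, H.Adj v j → G.Adj y (φ j)) := by
  have hn' : ¬ H.Adj v u := fun h => hn h.symm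
  have eu : Function.update (Function.update φ u x) v y u = x := by
    simp [Function.update_of_ne huv]
  have ev : Function.update (Function.update φ u x) v y v = y := by simp
  have eo : ∀ i, i ≠ u → i ≠ v → Function.update (Function.update φ u x) v y i = φ i := by
    intro i h1 h2
    rw [Function.update_of_ne h2, Function.update_of_ne h1]
  generalize Function.update (Function.update φ u x) v y = ψ at eu ev eo
  have nbu : ∀ j, H.Adj u j → ψ j = φ j := fun j h =>
    eo j (fun e => H.loopless.irrefl u (e ▸ h)) (fun e => hn (e ▸ h))
  have nbv : ∀ j, H.Adj v j → ψ j = φ j := fun j h =>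
    eo j (fun e => hn' (e ▸ h)) (fun e => H.loopless.irrefl v (e ▸ h))
  constructor
  · rintro ⟨h1, h2⟩
    refine ⟨⟨fun i a b => eo i a b ▸ h1 i, fun i j a b c d h => ?_⟩,
      ⟨eu ▸ h1 u, fun j h => ?_⟩, ⟨ev ▸ h1 v, fun j h => ?_⟩⟩
    · rw [← eo i a b, ← eo j c d]; exact h2 i j h
    · rw [← nbu j h, ← eu]; exact h2 u j h
    · rw [← nbv j h, ← ev]; exact h2 v j h
  · rintro ⟨⟨h1, h2⟩, ⟨h3, h4⟩, ⟨h5, h6⟩⟩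
    refine ⟨fun i => ?_, fun i j h => ?_⟩
    · by_cases a : i = u
      · subst a; rwa [eu]
      by_cases b : i = v
      · subst b; rwa [ev]
      rw [eo i a b]; exact h1 i a b
    · by_cases a : i = u
      · subst a; rw [eu, nbu j h]; exact h4 j h
      by_cases b : i = v
      · subst b; rw [ev, nbv j h]; exact h6 j h
      by_cases c : j = u
      · subst c; rw [eu, nbu i h.symm]; exact (h4 i h.symm).symm
      by_cases d : j = v
      · subst d; rw [ev, nbv i h.symm]; exact (h6 i h.symm).symm
      rw [eo i a b, eo j c d]; exact h2 i j a b c d h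

lemma isHomIn_iff_delete {α β : Type} (H : SimpleGraph α) (G : SimpleGraph β)
    (U : α → Finset β) {u v : α} (h : H.Adj u v) (φ : α → β) :
    IsHomIn H G U φ ↔ IsHomIn (H.deleteEdges {s(u, v)}) G U φ ∧ G.Adj (φ u) (φ v) := by
  constructor
  · rintro ⟨h1, h2⟩
    exact ⟨⟨h1, fun i j hij => h2 i j (SimpleGraph.deleteEdges_adj.1 hij).1⟩, h2 u v h⟩
  · rintro ⟨⟨h1, h2⟩, h3⟩
    refine ⟨h1, fun i j hij => ?_⟩
    by_cases e : s(i, j) = s(u, v)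
    · rcases Sym2.eq_iff.1 e with ⟨rfl, rfl⟩ | ⟨rfl, rfl⟩
      · exact h3
      · exact h3.symm
    · exact h2 i j (SimpleGraph.deleteEdges_adj.2 ⟨hij, by simpa using e⟩)

open Classical in
/-- Deleting one edge of `H` changes the homomorphism count by a factor `p`, up to an error
`α v(G)^{v(H)}`. -/
lemma homCount_delete_edge {α β : Type} [Fintype α] [Fintype β]
    (G : SimpleGraph β) (p α' : ℝ) (hα : 0 ≤ α')
    (hG : ∀ A B : Finset β,
      |(pairEdgeCount G A B : ℝ) - p * (A.card : ℝ) * (B.card : ℝ)| ≤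
        α' * (Fintype.card β : ℝ) ^ 2)
    (H : SimpleGraph α) (U : α → Finset β) {u v : α} (h : H.Adj u v) :
    |(homCount H G U : ℝ) - p * homCount (H.deleteEdges {s(u, v)}) G U| ≤
      α' * (Fintype.card β : ℝ) ^ Fintype.card α := by
  set H' := H.deleteEdges {s(u, v)} with hH'
  set N : ℝ := (Fintype.card β : ℝ) with hN
  have hn : ¬ H'.Adj u v := by simp [hH']
  let g : (α → β) → ℝ := fun φ =>
    (if IsHomIn H' G U φ then 1 else 0) * ((if G.Adj (φ u) (φ v) then 1 else 0) - p)
  have hg : (homCount H G U : ℝ) - p * homCount H' G U = ∑ φ, g φ := by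
    rw [homCount_eq_sum, homCount_eq_sum, Finset.mul_sum, ← Finset.sum_sub_distrib]
    refine Finset.sum_congr rfl fun φ _ => ?_
    simp only [g, isHomIn_iff_delete H G U h φ, ← hH']
    by_cases a : IsHomIn H' G U φ <;> by_cases b : G.Adj (φ u) (φ v) <;> simp [a, b]
  rw [hg]
  have hsum : N * (N * ∑ φ, g φ) =
      ∑ φ : α → β, ∑ x, ∑ y, g (Function.update (Function.update φ u x) v y) := by
    rw [sum_update u (fun φ => ∑ y, g (Function.update φ v y)), sum_update v g]
  have hin : ∀ φ : α → β,
      |∑ x, ∑ y, g (Function.update (Function.update φ u x) v y)| ≤ α' * N ^ 2 := by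
    intro φ
    let A : Finset β := {x | x ∈ U u ∧ ∀ j, H'.Adj u j → G.Adj x (φ j)}
    let B : Finset β := {y | y ∈ U v ∧ ∀ j, H'.Adj v j → G.Adj y (φ j)}
    have hterm := isHomIn_update_iff H' G U h.ne hn φ
    by_cases C : (∀ i, i ≠ u → i ≠ v → φ i ∈ U i) ∧
        (∀ i j, i ≠ u → i ≠ v → j ≠ u → j ≠ v → H'.Adj i j → G.Adj (φ i) (φ j))
    · have : ∑ x, ∑ y, g (Function.update (Function.update φ u x) v y) =
          (pairEdgeCount G A B : ℝ) - p * A.card * B.card := by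
        have hc : p * (A.card : ℝ) * B.card =
            ∑ x : β, ∑ y : β, p * ((if x ∈ A then 1 else 0) * (if y ∈ B then 1 else 0)) := by
          simp only [← Finset.mul_sum, ← Finset.sum_mul, Finset.sum_ite_mem,
            Finset.univ_inter, Finset.sum_const]
          simp [mul_assoc]
        rw [hc, pairEdgeCount_eq_sum, ← Finset.sum_sub_distrib]
        refine Finset.sum_congr rfl fun x _ => ?_
        rw [← Finset.sum_sub_distrib]
        refine Finset.sum_congr rfl fun y _ => ?_
        have hAB : IsHomIn H' G U (Function.update (Function.update φ u x) v y) ↔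
            x ∈ A ∧ y ∈ B := by
          rw [hterm]; simp only [A, B, Finset.mem_filter, Finset.mem_univ, true_and]
          exact and_iff_right C
        simp only [g, hAB, Function.update_self, Function.update_of_ne h.ne]
        by_cases a : x ∈ A <;> by_cases b : y ∈ B <;> by_cases c : G.Adj x y <;>
          simp [a, b, c]
      rw [this]
      exact hG A B
    · have : ∑ x, ∑ y, g (Function.update (Function.update φ u x) v y) = 0 := by
        refine Finset.sum_eq_zero fun x _ => Finset.sum_eq_zero fun y _ => ?_
        simp only [g, hterm]
        rw [if_neg fun t => C t.1, zero_mul]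
      rw [this, abs_zero]
      positivity
  rcases isEmpty_or_nonempty β with hβ | hβ
  · have : IsEmpty (α → β) := ⟨fun φ => hβ.false (φ u)⟩
    rw [Fintype.sum_empty, abs_zero]
    positivity
  · have hNpos : 0 < N := by simp [hN, Fintype.card_pos]
    have hb : |N * (N * ∑ φ, g φ)| ≤ N ^ Fintype.card α * (α' * N ^ 2) := by
      rw [hsum]
      refine (Finset.abs_sum_le_sum_abs _ _).trans
        ((Finset.sum_le_sum fun φ _ => hin φ).trans_eq ?_)
      simp [hN]
    rw [abs_mul, abs_mul, abs_of_pos hNpos] at hb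
    have h2 : 0 < N ^ 2 := by positivity
    refine le_of_mul_le_mul_left ?_ h2
    linarith

lemma edgeCount_delete {α : Type} [Fintype α] (H : SimpleGraph α) {u v : α} (h : H.Adj u v) :
    edgeCount H = edgeCount (H.deleteEdges {s(u, v)}) + 1 := by
  unfold edgeCount
  rw [SimpleGraph.edgeSet_deleteEdges, Nat.card_coe_set_eq, Nat.card_coe_set_eq]
  exact (Set.ncard_sdiff_singleton_add_one (by simpa using h) (Set.toFinite _)).symm

lemma homCount_bot {α β : Type} [Fintype α] [Fintype β] (G : SimpleGraph β)
    (U : α → Finset β) :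
    (homCount (⊥ : SimpleGraph α) G U : ℝ) = ∏ i, ((U i).card : ℝ) := by
  classical
  unfold homCount
  rw [Nat.card_eq_fintype_card, Fintype.card_subtype, ← Nat.cast_prod, ← Fintype.card_piFinset]
  congr 2
  ext φ
  simp

/-- If `|e(A,B) − p |A| |B|| ≤ α v(G)²` for all `A, B ⊆ V(G)`, then for every graph `H`
and all subsets `U₁, …, U_{v(H)} ⊆ V(G)`,
`|c(H,G;U₁,…,U_{v(H)}) − p^{e(H)} ∏ᵢ |Uᵢ|| ≤ e(H) α v(G)^{v(H)}`. -/
theorem stmt6 {β : Type} [Fintype β] (G : SimpleGraph β) (p α' : ℝ)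
    (hp0 : 0 ≤ p) (hp1 : p ≤ 1) (hα : 0 ≤ α')
    (hG : ∀ A B : Finset β,
      |(pairEdgeCount G A B : ℝ) - p * (A.card : ℝ) * (B.card : ℝ)| ≤
        α' * (Fintype.card β : ℝ) ^ 2) :
    ∀ (α : Type) [Fintype α] (H : SimpleGraph α) (U : α → Finset β),
      |(homCount H G U : ℝ) - p ^ edgeCount H * ∏ i, ((U i).card : ℝ)| ≤
        (edgeCount H : ℝ) * α' * (Fintype.card β : ℝ) ^ (Fintype.card α) := by
  intro α _ H U
  induction hn : edgeCount H generalizing H with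
  | zero =>
    have : H = ⊥ := by
      by_contra hne
      obtain ⟨u, v, h⟩ := SimpleGraph.ne_bot_iff_exists_adj.1 hne
      have := edgeCount_delete H h
      omega
    subst this
    simp [homCount_bot]
  | succ n ih =>
    have hne : H ≠ ⊥ := by
      rintro rfl
      simp [edgeCount] at hn
    obtain ⟨u, v, h⟩ := SimpleGraph.ne_bot_iff_exists_adj.1 hne
    have hd := edgeCount_delete H h
    have h1 := homCount_delete_edge G p α' hα hG H U h
    have h2 := ih (H.deleteEdges {s(u, v)}) (by omega)
    set c' : ℝ := (homCount (H.deleteEdges {s(u, v)}) G U : ℝ)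
    set P : ℝ := ∏ i, ((U i).card : ℝ)
    have h3 : |p * (c' - p ^ n * P)| ≤ n * α' * (Fintype.card β : ℝ) ^ (Fintype.card α) := by
      rw [abs_mul, abs_of_nonneg hp0]
      exact (mul_le_of_le_one_left (abs_nonneg _) hp1).trans h2
    have h4 := abs_add_le ((homCount H G U : ℝ) - p * c') (p * (c' - p ^ n * P))
    have h5 : (homCount H G U : ℝ) - p ^ (n + 1) * P =
        ((homCount H G U : ℝ) - p * c') + p * (c' - p ^ n * P) := by ring
    rw [h5]
    push_cast
    linarith
end

section
/- Let H be a graph having a vertex v₁ of degree r ≥ 1, let p ∈ (0,1] and δ > 0, and let G be a graph satisfying R'_{H,p}(δ). Then Σ_{(u,v) ∈ V(G)×V(G)} |d(u)^r − d(v)^r| ≤ 4·p^{−e(H)}·δ·v(G)^{r+2}, where d(u) denotes the degree of the vertex u in G. -/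
/-!
For vertices `u, w` of `G` let `g(u, w)` be the number of homomorphisms `φ : H → G` with
`φ v₁ = w` that send every neighbour of `v₁` into the neighbourhood of `u`. Equivalently, `g(u, w)`
counts the homomorphisms of `H - v₁` that send the neighbours of `v₁` to common neighbours of `u`
and `w`, so `g` is symmetric (`homCount_linkSets_comm`).

Fix `u` and apply `R'_{H,p}(δ)` with `W` at `v₁`, `N(u)` at the neighbours of `v₁`, and `V(G)`
elsewhere. With `n = v(G)` and `h = v(H)`, this gives
`|∑_{w ∈ W} (g(u, w) - p^{e(H)} d(u)^r n^{h-r-1})| ≤ δ n^h` for every `W`, hence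
`∑_w |g(u, w) - p^{e(H)} d(u)^r n^{h-r-1}| ≤ 2 δ n^h`. By symmetry of `g`, the triangle
inequality bounds `p^{e(H)} n^{h-r-1} |d(u)^r - d(w)^r|` by the sum of the deviations for `(u, w)`
and for `(w, u)`; summing over all pairs yields the claim.
-/

open Finset

open Classical in
/-- The sets prescribed for the images of the vertices of `H`: `W` at `v₁`, the neighbourhood of
`u` at the neighbours of `v₁`, and all of `V(G)` elsewhere. -/
noncomputable def linkSets {α β : Type} [Fintype β] (H : SimpleGraph α) (G : SimpleGraph β)
    (v₁ : α) (u : β) (W : Finset β) (i : α) : Finset β :=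
  if i = v₁ then W else if H.Adj v₁ i then univ.filter (G.Adj u) else univ

/-- If all subset sums of `x` are at most `C` in absolute value, then so are the sum of its
positive part and the sum of its negative part. -/
lemma sum_abs_le_of_subset_sums {β : Type} [Fintype β] (x : β → ℝ) (C : ℝ)
    (h : ∀ W : Finset β, |∑ w ∈ W, x w| ≤ C) : ∑ w, |x w| ≤ 2 * C := by
  classical
  have h1 := (abs_le.1 (h (univ.filter fun w => 0 ≤ x w))).2
  have h2 := (abs_le.1 (h (univ.filter fun w => ¬ 0 ≤ x w))).1
  rw [← sum_filter_add_sum_filter_not univ (fun w => 0 ≤ x w)]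
  have e1 : ∑ w ∈ univ.filter (fun w => 0 ≤ x w), |x w| =
      ∑ w ∈ univ.filter (fun w => 0 ≤ x w), x w :=
    sum_congr rfl fun w hw => abs_of_nonneg (mem_filter.1 hw).2
  have e2 : ∑ w ∈ univ.filter (fun w => ¬ 0 ≤ x w), |x w| =
      -∑ w ∈ univ.filter (fun w => ¬ 0 ≤ x w), x w := by
    rw [← sum_neg_distrib]
    exact sum_congr rfl fun w hw => abs_of_neg (not_le.1 (mem_filter.1 hw).2)
  linarith

lemma homCount_linkSets_eq_sum {α β : Type} [Fintype α] [Fintype β] (H : SimpleGraph α)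
    (G : SimpleGraph β) (v₁ : α) (u : β) (W : Finset β) :
    homCount H G (linkSets H G v₁ u W) = ∑ w ∈ W, homCount H G (linkSets H G v₁ u {w}) := by
  classical
  unfold homCount
  simp only [Nat.card_eq_fintype_card, Fintype.card_subtype]
  rw [card_eq_sum_card_fiberwise (f := fun φ => φ v₁) (t := W)]
  · refine sum_congr rfl fun w hw => ?_
    congr 1
    ext φ
    simp only [mem_filter, mem_univ, true_and]
    constructor
    · rintro ⟨⟨h1, h2⟩, h3⟩
      refine ⟨fun i => ?_, h2⟩
      have := h1 i
      by_cases hi : i = v₁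
      · subst hi; simp [linkSets, h3]
      · simpa [linkSets, hi] using this
    · rintro ⟨h1, h2⟩
      have h3 : φ v₁ = w := by simpa [linkSets] using h1 v₁
      refine ⟨⟨fun i => ?_, h2⟩, h3⟩
      by_cases hi : i = v₁
      · subst hi; simpa [linkSets, h3] using hw
      · simpa [linkSets, hi] using h1 i
  · intro φ hφ
    have := (mem_filter.1 hφ).2.1 v₁
    simpa [linkSets] using this

/-- Moving the image of `v₁` from `w` to `u` maps the homomorphisms counted on the left injectively
to those counted on the right. -/
lemma homCount_linkSets_le {α β : Type} [Fintype α] [Fintype β] (H : SimpleGraph α)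
    (G : SimpleGraph β) (v₁ : α) (u w : β) :
    homCount H G (linkSets H G v₁ u {w}) ≤ homCount H G (linkSets H G v₁ w {u}) := by
  classical
  unfold homCount
  have key : ∀ φ : α → β, ((∀ i, φ i ∈ linkSets H G v₁ u {w} i) ∧
      ∀ i j, H.Adj i j → G.Adj (φ i) (φ j)) → φ v₁ = w ∧ ∀ i, H.Adj v₁ i → G.Adj u (φ i) := by
    rintro φ ⟨h1, -⟩
    refine ⟨by simpa [linkSets] using h1 v₁, fun i hi => ?_⟩
    simpa [linkSets, hi, hi.ne'] using h1 i
  refine Nat.card_le_card_of_injective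
    (fun φ => ⟨Function.update φ.1 v₁ u, fun i => ?_, fun i j hij => ?_⟩) ?_
  · obtain ⟨h1, h2⟩ := key φ.1 φ.2
    by_cases hi : i = v₁
    · subst hi; simp [linkSets]
    · by_cases ha : H.Adj v₁ i
      · have := φ.2.2 v₁ i ha
        rw [h1] at this
        simpa [linkSets, hi, ha] using this
      · simp [linkSets, hi, ha]
  · obtain ⟨h1, h2⟩ := key φ.1 φ.2
    by_cases hi : i = v₁
    · subst hi
      simpa [Function.update_of_ne hij.ne'] using h2 j hij
    · by_cases hj : j = v₁
      · subst hj
        simpa [Function.update_of_ne hi] using (h2 i hij.symm).symm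
      · simpa [Function.update_of_ne hi, Function.update_of_ne hj] using φ.2.2 i j hij
  · intro φ ψ h
    have h' := congrArg Subtype.val h
    apply Subtype.ext
    funext i
    by_cases hi : i = v₁
    · subst hi; rw [(key φ.1 φ.2).1, (key ψ.1 ψ.2).1]
    · simpa [hi] using congrFun h' i

lemma homCount_linkSets_comm {α β : Type} [Fintype α] [Fintype β] (H : SimpleGraph α)
    (G : SimpleGraph β) (v₁ : α) (u w : β) :
    homCount H G (linkSets H G v₁ u {w}) = homCount H G (linkSets H G v₁ w {u}) :=
  le_antisymm (homCount_linkSets_le ..) (homCount_linkSets_le ..)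

/-- Here `K` is the number of vertices of `H` other than `v₁` and its neighbours. -/
lemma exists_prod_card_linkSets {α β : Type} [Fintype α] [Fintype β] (H : SimpleGraph α)
    (G : SimpleGraph β) (v₁ : α) :
    ∃ K : ℕ, Fintype.card α = 1 + (Nat.card (H.neighborSet v₁) + K) ∧
      ∀ u W, ∏ i, ((linkSets H G v₁ u W i).card : ℝ) =
        W.card * ((Nat.card (G.neighborSet u) : ℝ) ^ Nat.card (H.neighborSet v₁) *
          (Fintype.card β : ℝ) ^ K) := by
  classical
  have hN : Nat.card (H.neighborSet v₁) =
      ((univ.filter fun i => ¬ i = v₁).filter fun i => H.Adj v₁ i).card := by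
    rw [Nat.card_eq_fintype_card, ← Set.toFinset_card]
    congr 1
    ext i
    rw [Set.mem_toFinset, SimpleGraph.mem_neighborSet]
    simp only [mem_filter, mem_univ, true_and]
    exact ⟨fun h => ⟨h.ne', h⟩, fun h => h.2⟩
  have h1 : (univ.filter fun i : α => i = v₁).card = 1 :=
    card_eq_one.2 ⟨v₁, by ext; simp⟩
  refine ⟨((univ.filter fun i => ¬ i = v₁).filter fun i => ¬ H.Adj v₁ i).card, ?_, fun u W => ?_⟩
  · rw [hN, card_filter_add_card_filter_not, ← h1, card_filter_add_card_filter_not, card_univ]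
  · have hG : (univ.filter (G.Adj u)).card = Nat.card (G.neighborSet u) := by
      rw [Nat.card_eq_fintype_card, ← Set.toFinset_card]
      congr 1
      ext i
      simp
    rw [hN]
    simp only [linkSets, apply_ite Finset.card, Nat.cast_ite, prod_ite, prod_const, h1, pow_one,
      hG, card_univ]

/-- If `H` has a vertex `v₁` of degree `r ≥ 1`, `p ∈ (0,1]`, `δ > 0` and `G` satisfies
`R'_{H,p}(δ)`, then `∑_{u,v ∈ V(G)} |d(u)^r − d(v)^r| ≤ 4 p^{−e(H)} δ v(G)^{r+2}`. -/
theorem stmt9 {α β : Type} [Fintype α] [Fintype β]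
    (H : SimpleGraph α) (G : SimpleGraph β) (v₁ : α) (r : ℕ) (hr : 1 ≤ r)
    (hdeg : Nat.card (H.neighborSet v₁) = r)
    (p δ : ℝ) (hp0 : 0 < p) (hp1 : p ≤ 1) (hδ : 0 < δ)
    (hG : PropR' H G p δ) :
    ∑ u : β, ∑ v : β,
        |(Nat.card (G.neighborSet u) : ℝ) ^ r - (Nat.card (G.neighborSet v) : ℝ) ^ r| ≤
      4 * p ^ (-(edgeCount H : ℤ)) * δ * (Fintype.card β : ℝ) ^ (r + 2) := by
  classical
  obtain ⟨K, hK, hprod⟩ := exists_prod_card_linkSets H G v₁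
  rw [hdeg] at hK hprod
  -- If `V(G)` is empty, then `n ^ K` may vanish and cannot be cancelled below.
  rcases isEmpty_or_nonempty β with hβ | hβ
  · simp
  have hn : (0 : ℝ) < Fintype.card β := by exact_mod_cast Fintype.card_pos
  set n : ℝ := (Fintype.card β : ℝ) with hn_def
  set d : β → ℝ := fun u => (Nat.card (G.neighborSet u) : ℝ) ^ r with hd
  set g : β → β → ℝ := fun u w => homCount H G (linkSets H G v₁ u {w}) with hg
  have hsymm : ∀ u w, g u w = g w u := fun u w => by
    simp only [hg]; rw [homCount_linkSets_comm]
  set P : ℝ := p ^ edgeCount H with hP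
  have hP0 : 0 < P := pow_pos hp0 _
  have hdev : ∀ u, ∑ w, |g u w - P * (d u * n ^ K)| ≤ 2 * (δ * n ^ Fintype.card α) := by
    intro u
    refine sum_abs_le_of_subset_sums _ _ fun W => ?_
    have h := hG (linkSets H G v₁ u W)
    rw [hprod, homCount_linkSets_eq_sum] at h
    convert h using 2
    rw [sum_sub_distrib, sum_const, nsmul_eq_mul]
    push_cast
    simp only [hg, hd]
    ring
  have htri : ∀ u w, P * n ^ K * |d u - d w| ≤
      |g u w - P * (d u * n ^ K)| + |g w u - P * (d w * n ^ K)| := by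
    intro u w
    rw [← abs_of_pos (mul_pos hP0 (pow_pos hn K)), ← abs_mul, hsymm w u,
      abs_sub_comm (g u w) (P * (d u * n ^ K))]
    refine le_trans (le_of_eq ?_) (abs_add_le _ _)
    congr 1
    ring
  have hsum : P * n ^ K * ∑ u, ∑ w, |d u - d w| ≤ 4 * δ * n ^ (Fintype.card α + 1) := by
    have hA : ∑ u, ∑ w, |g u w - P * (d u * n ^ K)| ≤ n * (2 * (δ * n ^ Fintype.card α)) := by
      refine (sum_le_sum fun u _ => hdev u).trans (le_of_eq ?_)
      rw [sum_const, nsmul_eq_mul, card_univ]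
    calc P * n ^ K * ∑ u, ∑ w, |d u - d w|
        = ∑ u, ∑ w, P * n ^ K * |d u - d w| := by simp only [mul_sum]
      _ ≤ ∑ u, ∑ w, (|g u w - P * (d u * n ^ K)| + |g w u - P * (d w * n ^ K)|) :=
          sum_le_sum fun u _ => sum_le_sum fun w _ => htri u w
      _ = ∑ u, ∑ w, |g u w - P * (d u * n ^ K)| + ∑ u, ∑ w, |g u w - P * (d u * n ^ K)| := by
          simp only [sum_add_distrib]
          congr 1
          exact sum_comm
      _ ≤ 4 * δ * n ^ (Fintype.card α + 1) := by
          rw [pow_succ]; linarith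
  have hPK : 0 < P * n ^ K := mul_pos hP0 (pow_pos hn K)
  rw [zpow_neg, zpow_natCast]
  refine le_of_mul_le_mul_left (hsum.trans (le_of_eq ?_)) hPK
  rw [hK, ← hP]
  field_simp
  ring
end

section
/- Let r ≥ 1 be a natural number and let a₁,…,aₙ and b₁,…,bₙ be two sequences of n non-negative real numbers. Then Σ_{i=1}^n Σ_{j=1}^n |b_j^r − a_i^r| ≥ (Σ_{j=1}^n b_j^{r−1}) · (Σ_{j=1}^n b_j − Σ_{i=1}^n a_i). -/
/-!
Since `t ↦ t ^ (r - 1)` is monotone on the non-negative reals, Chebyshev's sum inequality gives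
`(∑ⱼ bⱼ^(r-1)) * (∑ⱼ bⱼ) ≤ n * ∑ⱼ bⱼ^r`, so the left-hand side is at most
`∑ᵢ ∑ⱼ bⱼ^(r-1) * (bⱼ - aᵢ)`. Each summand is then bounded by `|bⱼ^r - aᵢ^r|`
(`pow_mul_sub_le_abs`).
-/

open Finset

/-- If `y ≤ x` then `x ^ s * y ≥ y ^ (s + 1)`; otherwise the left-hand side is non-positive. -/
lemma pow_mul_sub_le_abs (s : ℕ) {x y : ℝ} (hx : 0 ≤ x) (hy : 0 ≤ y) :
    x ^ s * (x - y) ≤ |x ^ (s + 1) - y ^ (s + 1)| := by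
  rcases le_total y x with h | h
  · have h1 : y ^ s * y ≤ x ^ s * y :=
      mul_le_mul_of_nonneg_right (pow_le_pow_left₀ hy h s) hy
    refine le_trans ?_ (le_abs_self _)
    rw [pow_succ, pow_succ]
    linarith
  · exact (mul_nonpos_of_nonneg_of_nonpos (pow_nonneg hx s) (sub_nonpos.2 h)).trans
      (abs_nonneg _)

/-- For `r ≥ 1` and non-negative reals `a₁, …, aₙ` and `b₁, …, bₙ`,
`∑ᵢ∑ⱼ |bⱼ^r − aᵢ^r| ≥ (∑ⱼ bⱼ^{r−1}) · (∑ⱼ bⱼ − ∑ᵢ aᵢ)`. -/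
theorem stmt10 (n r : ℕ) (hr : 1 ≤ r) (a b : Fin n → ℝ)
    (ha : ∀ i, 0 ≤ a i) (hb : ∀ j, 0 ≤ b j) :
    (∑ j, b j ^ (r - 1)) * ((∑ j, b j) - ∑ i, a i) ≤
      ∑ i, ∑ j, |b j ^ r - a i ^ r| := by
  obtain ⟨s, rfl⟩ : ∃ s, r = s + 1 := ⟨r - 1, by omega⟩
  rw [Nat.add_sub_cancel]
  have hmono : Monovary (fun j => b j ^ s) b := fun i j hij =>
    pow_le_pow_left₀ (hb i) hij.le s
  have hcheb : (∑ j, b j ^ s) * ∑ j, b j ≤ n * ∑ j, b j ^ s * b j := by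
    simpa using hmono.sum_mul_sum_le_card_mul_sum
  have hexpand : ∑ i, ∑ j, b j ^ s * (b j - a i) =
      n * ∑ j, b j ^ s * b j - (∑ j, b j ^ s) * ∑ i, a i := by
    simp only [mul_sub, sum_sub_distrib, ← sum_mul, ← mul_sum]
    simp
  calc (∑ j, b j ^ s) * ((∑ j, b j) - ∑ i, a i)
      ≤ ∑ i, ∑ j, b j ^ s * (b j - a i) := by rw [hexpand, mul_sub]; linarith
    _ ≤ ∑ i, ∑ j, |b j ^ (s + 1) - a i ^ (s + 1)| :=
      sum_le_sum fun i _ => sum_le_sum fun j _ => pow_mul_sub_le_abs s (hb j) (ha i)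
end
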